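/- Let d ≥ 1, let M be a measurable space with probability measure Q, and let φ : ℝ^d × M × M → [0,1] be measurable with φ(x,p,q) = φ(−x,q,p). For n ≥ 1 and p,q ∈ M define the self-avoiding-walk kernel d^{[n]}(p,q) := ∫_{(ℝ^d)ⁿ} ∫_{M^{n−1}} ∏_{i=0}^{n−1} φ(x_{i+1}−x_i, p_i, p_{i+1}) · ∏_{(i,j): 1≤i, i+2≤j≤n} (1−φ(x_j−x_i, p_i, p_j)) Q^{n−1}(d(p_1,…,p_{n−1})) dx_1⋯dx_n, where x_0 := 0, p_0 := p, p_n := q (all integrals are Lebesgue integrals of nonnegative functions, valued in [0,∞]). Then for every n ≥ 1 and all p,q ∈ M: d^{[2n]}(p,q) ≤ ∫ d^{[n]}(p,r) d^{[n]}(r,q) Q(dr). -/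

import Mathlib

open MeasureTheory
open scoped ENNReal

/-- The points `x_0 = 0, x_1, …, x_n` (with `n = k+1`) of a walk in `ℝ^d`,
assembled from `y = (x_1, …, x_{k+1})`. -/
noncomputable def pts {d k : ℕ} (y : Fin (k + 1) → (Fin d → ℝ)) :
    Fin (k + 2) → (Fin d → ℝ) :=
  Fin.cons 0 y

/-- The marks `p_0 = p, p_1, …, p_{n-1}, p_n = q` (with `n = k+1`) of a walk,
assembled from `m = (p_1, …, p_k)`. -/
def mks {M : Type*} {k : ℕ} (p q : M) (m : Fin k → M) : Fin (k + 2) → M :=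
  Fin.cons p (Fin.snoc m q)

/-- The product `∏_{i=0}^{n-1} φ(x_{i+1} - x_i, p_i, p_{i+1})` along a walk of length
`n = k+1`. -/
noncomputable def pathProd {d : ℕ} {M : Type*} (φ : (Fin d → ℝ) → M → M → ℝ)
    (k : ℕ) (p q : M) (y : Fin (k + 1) → (Fin d → ℝ)) (m : Fin k → M) : ℝ :=
  ∏ i : Fin (k + 1),
    φ (pts y i.succ - pts y i.castSucc) (mks p q m i.castSucc) (mks p q m i.succ)

/-- The avoidance product `∏_{1 ≤ i, i+2 ≤ j ≤ n} (1 - φ(x_j - x_i, p_i, p_j))` along a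
walk of length `n = k+1`. -/
noncomputable def avoidProd {d : ℕ} {M : Type*} (φ : (Fin d → ℝ) → M → M → ℝ)
    (k : ℕ) (p q : M) (y : Fin (k + 1) → (Fin d → ℝ)) (m : Fin k → M) : ℝ :=
  ∏ i : Fin (k + 2), ∏ j : Fin (k + 2),
    if 1 ≤ (i : ℕ) ∧ (i : ℕ) + 2 ≤ (j : ℕ) then
      1 - φ (pts y j - pts y i) (mks p q m i) (mks p q m j)
    else 1

/-- The self-avoiding-walk kernel `d^{[n]}(p,q)` for `n = k+1`:
`dSAW Q φ k p q = d^{[k+1]}(p,q)`. -/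
noncomputable def dSAW {d : ℕ} {M : Type*} [MeasurableSpace M] (Q : Measure M)
    (φ : (Fin d → ℝ) → M → M → ℝ) (k : ℕ) (p q : M) : ℝ≥0∞ :=
  ∫⁻ y : Fin (k + 1) → (Fin d → ℝ),
    (∫⁻ m : Fin k → M,
      ENNReal.ofReal (pathProd φ k p q y m * avoidProd φ k p q y m)
      ∂(Measure.pi fun _ => Q)) ∂volume

/-! A walk of length `(k + 1) + (l + 1)` is a walk of length `k + 1` from mark `p` to some mark `r`,
followed by a walk of length `l + 1` from `r` to `q` translated to start at the endpoint of the
first. The path product factorizes along this splitting. The avoidance product has all its factors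
in `[0, 1]`, so it only grows when the pairs lying in neither half are dropped. Integrating over
the two halves separately is allowed by Tonelli and translation invariance of Lebesgue measure. -/

section FinTuple

variable {α : Type*} [MeasurableSpace α] (μ : Measure α) [SigmaFinite μ]

theorem measurePreserving_finAppend (m n : ℕ) :
    MeasurePreserving (fun z : (Fin m → α) × (Fin n → α) => Fin.append z.1 z.2)
      ((Measure.pi fun _ => μ).prod (Measure.pi fun _ => μ)) (Measure.pi fun _ => μ) := by
  have hreindex := (measurePreserving_piCongrLeft (fun _ : Fin (m + n) => μ) finSumFinEquiv).comp
    (measurePreserving_sumPiEquivProdPi_symm fun _ : Fin m ⊕ Fin n => μ)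
  convert hreindex using 1
  funext z i
  obtain ⟨j, rfl⟩ := finSumFinEquiv.surjective i
  rw [Function.comp_apply, MeasurableEquiv.coe_piCongrLeft, Equiv.piCongrLeft_apply_apply]
  rcases j with j | j
  · exact Fin.append_left z.1 z.2 j
  · exact Fin.append_right z.1 z.2 j

theorem measurePreserving_finSnoc (n : ℕ) :
    MeasurePreserving (fun z : α × (Fin n → α) => (Fin.snoc z.2 z.1 : Fin (n + 1) → α))
      (μ.prod (Measure.pi fun _ => μ)) (Measure.pi fun _ => μ) := by
  convert (measurePreserving_piFinSuccAbove (fun _ : Fin (n + 1) => μ) (Fin.last n)).symm using 1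
  funext z
  exact (Fin.insertNth_last' z.1 z.2).symm

end FinTuple

section Concatenation

/-- The position of a vertex of the first walk in the concatenated walk. -/
def headIdx {k : ℕ} (l : ℕ) : Fin (k + 2) ↪ Fin (k + 1 + l + 2) :=
  Fin.castLEEmb (by omega)

/-- The position of a vertex of the second walk in the concatenated walk. Its vertex `0` is the
last vertex of the first walk. -/
def tailIdx {l : ℕ} (k : ℕ) : Fin (l + 2) ↪ Fin (k + 1 + l + 2) :=
  Fin.natAddEmb (k + 1)

variable {d k l : ℕ} {M : Type*}

/-- The points of the concatenation of two walks: the second walk is translated so that it starts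
at the last point of the first. -/
def concatPts (y : Fin (k + 1) → Fin d → ℝ) (z : Fin (l + 1) → Fin d → ℝ) :
    Fin (k + 1 + l + 1) → Fin d → ℝ :=
  Fin.append (m := k + 1) (n := l + 1) y fun i => y (Fin.last k) + z i

/-- The interior marks of the concatenation of two walks meeting at a point of mark `r`. -/
def concatMks (r : M) (m : Fin k → M) (m' : Fin l → M) : Fin (k + 1 + l) → M :=
  Fin.append (Fin.snoc m r : Fin (k + 1) → M) m'

theorem pts_concatPts_headIdx (y : Fin (k + 1) → Fin d → ℝ) (z : Fin (l + 1) → Fin d → ℝ)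
    (i : Fin (k + 2)) : pts (concatPts y z) (headIdx l i) = pts y i := by
  cases i using Fin.cases with
  | zero => rfl
  | succ i => exact Fin.append_left (n := l + 1) y (fun j => y (Fin.last k) + z j) i

theorem pts_concatPts_tailIdx (y : Fin (k + 1) → Fin d → ℝ) (z : Fin (l + 1) → Fin d → ℝ)
    (i : Fin (l + 2)) :
    pts (concatPts y z) (tailIdx k i) = y (Fin.last k) + pts z i := by
  cases i using Fin.cases with
  | zero =>
    calc pts (concatPts y z) (tailIdx k 0)
        = y (Fin.last k) :=
          Fin.append_left (n := l + 1) y (fun j => y (Fin.last k) + z j) (Fin.last k)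
      _ = y (Fin.last k) + pts z 0 := (add_zero _).symm
  | succ i => exact Fin.append_right (n := l + 1) y (fun j => y (Fin.last k) + z j) i

theorem mks_concatMks_headIdx (p q r : M) (m : Fin k → M) (m' : Fin l → M) (i : Fin (k + 2)) :
    mks p q (concatMks r m m') (headIdx l i) = mks p r m i := by
  cases i using Fin.cases with
  | zero => rfl
  | succ i =>
    calc mks p q (concatMks r m m') (headIdx l i.succ)
        = concatMks r m m' (Fin.castAdd l i) :=
          Fin.snoc_castSucc (α := fun _ => M) q (concatMks r m m') (Fin.castAdd l i)
      _ = mks p r m i.succ := Fin.append_left _ _ _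

theorem mks_concatMks_tailIdx (p q r : M) (m : Fin k → M) (m' : Fin l → M) (i : Fin (l + 2)) :
    mks p q (concatMks r m m') (tailIdx k i) = mks r q m' i := by
  cases i using Fin.cases with
  | zero =>
    calc mks p q (concatMks r m m') (tailIdx k 0)
        = concatMks r m m' (Fin.castAdd l (Fin.last k)) :=
          Fin.snoc_castSucc (α := fun _ => M) q (concatMks r m m') (Fin.castAdd l (Fin.last k))
      _ = r := (Fin.append_left _ _ _).trans (Fin.snoc_last _ _)
  | succ i =>
    cases i using Fin.lastCases with
    | last =>
      exact (Fin.snoc_last (α := fun _ => M) q (concatMks r m m')).trans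
        (Fin.snoc_last (α := fun _ => M) q m').symm
    | cast i =>
      calc mks p q (concatMks r m m') (tailIdx k i.castSucc.succ)
          = concatMks r m m' (Fin.natAdd (k + 1) i) :=
            Fin.snoc_castSucc (α := fun _ => M) q (concatMks r m m') (Fin.natAdd (k + 1) i)
        _ = m' i := Fin.append_right _ _ _
        _ = mks r q m' i.castSucc.succ := (Fin.snoc_castSucc (α := fun _ => M) q m' i).symm

variable (d k l)

theorem measurePreserving_concatPts :
    MeasurePreserving
      (fun w : (Fin (k + 1) → Fin d → ℝ) × (Fin (l + 1) → Fin d → ℝ) => concatPts w.1 w.2) := by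
  have htranslate : MeasurePreserving
      (fun w : (Fin (k + 1) → Fin d → ℝ) × (Fin (l + 1) → Fin d → ℝ) =>
        (w.1, (fun _ => w.1 (Fin.last k)) + w.2)) (volume.prod volume) (volume.prod volume) :=
    (MeasurePreserving.id volume).skew_product
      (g := fun (y : Fin (k + 1) → Fin d → ℝ) z => (fun _ => y (Fin.last k)) + z)
      (by unfold Function.uncurry; fun_prop)
      (.of_forall fun _ => map_add_left_eq_self volume _)
  exact (measurePreserving_finAppend volume (k + 1) (l + 1)).comp htranslate

theorem measurePreserving_concatMks [MeasurableSpace M] (Q : Measure M) [SigmaFinite Q] :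
    MeasurePreserving
      (fun w : M × (Fin k → M) × (Fin l → M) => concatMks w.1 w.2.1 w.2.2)
      (Q.prod ((Measure.pi fun _ => Q).prod (Measure.pi fun _ => Q))) (Measure.pi fun _ => Q) :=
  (measurePreserving_finAppend Q (k + 1) l).comp <|
    ((measurePreserving_finSnoc Q k).prod (.id _)).comp (measurePreserving_prodAssoc _ _ _).symm

end Concatenation

section Weight

/-- The integrand of the kernel `dSAW`: the weight of a single marked walk. -/
noncomputable def walkWeight {d : ℕ} {M : Type*} (φ : (Fin d → ℝ) → M → M → ℝ) (k : ℕ)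
    (p q : M) (y : Fin (k + 1) → Fin d → ℝ) (m : Fin k → M) : ℝ≥0∞ :=
  ENNReal.ofReal (pathProd φ k p q y m * avoidProd φ k p q y m)

/-- The pairs of vertices of a walk with `n` vertices which the avoidance product ranges over. -/
def avoidPairs (n : ℕ) : Finset (Fin n × Fin n) :=
  {e | 1 ≤ (e.1 : ℕ) ∧ (e.1 : ℕ) + 2 ≤ e.2}

theorem mem_avoidPairs {n : ℕ} {e : Fin n × Fin n} :
    e ∈ avoidPairs n ↔ 1 ≤ (e.1 : ℕ) ∧ (e.1 : ℕ) + 2 ≤ e.2 := by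
  simp [avoidPairs]

theorem disjoint_map_headIdx_map_tailIdx (k l : ℕ) :
    Disjoint ((avoidPairs (k + 2)).map ((headIdx l).prodMap (headIdx l)))
      ((avoidPairs (l + 2)).map ((tailIdx k).prodMap (tailIdx k))) := by
  simp only [Finset.disjoint_left, Finset.mem_map, mem_avoidPairs]
  rintro _ ⟨⟨i, j⟩, ⟨-, hij⟩, rfl⟩ ⟨⟨i', j'⟩, ⟨hi', -⟩, heq⟩
  have hval : k + 1 + (i' : ℕ) = i := congrArg (fun e => (e.1 : ℕ)) heq
  dsimp only at hij hi'
  omega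

theorem map_headIdx_union_map_tailIdx_subset (k l : ℕ) :
    (avoidPairs (k + 2)).map ((headIdx l).prodMap (headIdx l)) ∪
      (avoidPairs (l + 2)).map ((tailIdx k).prodMap (tailIdx k)) ⊆ avoidPairs (k + 1 + l + 2) := by
  refine Finset.union_subset ?_ ?_ <;> intro e he <;>
    obtain ⟨⟨i, j⟩, hij, rfl⟩ := Finset.mem_map.1 he <;> rw [mem_avoidPairs] at hij ⊢
  · exact hij
  · change 1 ≤ k + 1 + (i : ℕ) ∧ k + 1 + (i : ℕ) + 2 ≤ k + 1 + (j : ℕ)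
    dsimp only at hij
    omega

variable {d : ℕ} {M : Type*} (φ : (Fin d → ℝ) → M → M → ℝ) {k l : ℕ} (p q r : M)
  (y : Fin (k + 1) → Fin d → ℝ) (z : Fin (l + 1) → Fin d → ℝ) (m : Fin k → M) (m' : Fin l → M)

theorem pathProd_concat :
    pathProd φ (k + 1 + l) p q (concatPts y z) (concatMks r m m') =
      pathProd φ k p r y m * pathProd φ l r q z m' := by
  have hsplit := Fin.prod_univ_add (a := k + 1) (b := l + 1) fun i =>
    φ (pts (concatPts y z) i.succ - pts (concatPts y z) i.castSucc)
      (mks p q (concatMks r m m') i.castSucc) (mks p q (concatMks r m m') i.succ)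
  refine hsplit.trans (congrArg₂ (· * ·) ?_ ?_) <;> refine Finset.prod_congr rfl fun i _ => ?_
  · change φ (pts _ (headIdx l i.succ) - pts _ (headIdx l i.castSucc))
      (mks _ _ _ (headIdx l i.castSucc)) (mks _ _ _ (headIdx l i.succ)) = _
    simp only [pts_concatPts_headIdx, mks_concatMks_headIdx]
  · change φ (pts _ (tailIdx k i.succ) - pts _ (tailIdx k i.castSucc))
      (mks _ _ _ (tailIdx k i.castSucc)) (mks _ _ _ (tailIdx k i.succ)) = _
    simp only [pts_concatPts_tailIdx, mks_concatMks_tailIdx, add_sub_add_left_eq_sub]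

theorem avoidProd_eq_prod_avoidPairs :
    avoidProd φ k p q y m = ∏ e ∈ avoidPairs (k + 2),
      (1 - φ (pts y e.2 - pts y e.1) (mks p q m e.1) (mks p q m e.2)) := by
  rw [avoidPairs, Finset.prod_filter, Fintype.prod_prod_type, avoidProd]

variable {φ}

theorem avoidProd_concat_le (h01 : ∀ x p q, φ x p q ∈ Set.Icc (0 : ℝ) 1) :
    avoidProd φ (k + 1 + l) p q (concatPts y z) (concatMks r m m') ≤
      avoidProd φ k p r y m * avoidProd φ l r q z m' := by
  have hdrop := Finset.prod_le_prod_of_subset_of_le_one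
    (f := fun e : Fin (k + 1 + l + 2) × Fin (k + 1 + l + 2) =>
      1 - φ (pts (concatPts y z) e.2 - pts (concatPts y z) e.1)
        (mks p q (concatMks r m m') e.1) (mks p q (concatMks r m m') e.2))
    (map_headIdx_union_map_tailIdx_subset k l)
    (fun _ _ => sub_nonneg.2 (h01 _ _ _).2) (fun _ _ _ => sub_le_self _ (h01 _ _ _).1)
  rw [Finset.prod_union (disjoint_map_headIdx_map_tailIdx k l)] at hdrop
  simpa only [avoidProd_eq_prod_avoidPairs, Finset.prod_map, Function.Embedding.coe_prodMap,
    Prod.map_fst, Prod.map_snd, pts_concatPts_headIdx, pts_concatPts_tailIdx,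
    mks_concatMks_headIdx, mks_concatMks_tailIdx, add_sub_add_left_eq_sub] using hdrop

theorem pathProd_nonneg (h0 : ∀ x p q, 0 ≤ φ x p q) : 0 ≤ pathProd φ k p q y m :=
  Finset.prod_nonneg fun _ _ => h0 _ _ _

theorem avoidProd_nonneg (h1 : ∀ x p q, φ x p q ≤ 1) : 0 ≤ avoidProd φ k p q y m := by
  rw [avoidProd_eq_prod_avoidPairs]
  exact Finset.prod_nonneg fun _ _ => sub_nonneg.2 (h1 _ _ _)

theorem walkWeight_concat_le (h01 : ∀ x p q, φ x p q ∈ Set.Icc (0 : ℝ) 1) :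
    walkWeight φ (k + 1 + l) p q (concatPts y z) (concatMks r m m') ≤
      walkWeight φ k p r y m * walkWeight φ l r q z m' := by
  have hpath := pathProd_nonneg p r y m fun x p q => (h01 x p q).1
  have hpath' := pathProd_nonneg r q z m' fun x p q => (h01 x p q).1
  have havoid := avoidProd_nonneg p r y m fun x p q => (h01 x p q).2
  unfold walkWeight
  rw [← ENNReal.ofReal_mul (mul_nonneg hpath havoid), mul_mul_mul_comm, pathProd_concat]
  exact ENNReal.ofReal_le_ofReal <| mul_le_mul_of_nonneg_left
    (avoidProd_concat_le p q r y z m m' h01) (mul_nonneg hpath hpath')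

end Weight

section Kernel

variable {d : ℕ} {M : Type*} [MeasurableSpace M] (Q : Measure M) (φ : (Fin d → ℝ) → M → M → ℝ)

/-- The density of the kernel `dSAW` in the points of the walk: the weight of a walk integrated
over its interior marks. -/
noncomputable def walkDensity (k : ℕ) (p q : M) (y : Fin (k + 1) → Fin d → ℝ) : ℝ≥0∞ :=
  ∫⁻ m, walkWeight φ k p q y m ∂(Measure.pi fun _ => Q)

theorem dSAW_eq_lintegral_walkDensity (k : ℕ) (p q : M) :
    dSAW Q φ k p q = ∫⁻ y, walkDensity Q φ k p q y :=
  rfl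

variable {φ}

theorem measurable_pts_apply {k : ℕ} (i : Fin (k + 2)) :
    Measurable fun y : Fin (k + 1) → Fin d → ℝ => pts y i := by
  cases i using Fin.cases with
  | zero => exact measurable_const
  | succ i => exact measurable_pi_apply i

theorem measurable_mks_apply {k : ℕ} (i : Fin (k + 2)) :
    Measurable fun w : M × M × (Fin k → M) => mks w.1 w.2.1 w.2.2 i := by
  cases i using Fin.cases with
  | zero => exact measurable_fst
  | succ i =>
    simp only [mks, Fin.cons_succ]
    cases i using Fin.lastCases with
    | last => simpa only [Fin.snoc_last] using measurable_snd.fst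
    | cast i =>
      simp only [Fin.snoc_castSucc]
      exact (measurable_pi_apply i).comp measurable_snd.snd

theorem measurable_walkWeight
    (hmeas : Measurable fun z : (Fin d → ℝ) × M × M => φ z.1 z.2.1 z.2.2) (k : ℕ) :
    Measurable (Function.uncurry fun w : M × M × (Fin (k + 1) → Fin d → ℝ) =>
      walkWeight φ k w.1 w.2.1 w.2.2) := by
  have hpts (i : Fin (k + 2)) := (measurable_pts_apply (d := d) i).comp
    (measurable_fst.snd.snd : Measurable fun w : (M × M × _) × (Fin k → M) => w.1.2.2)
  have hmks (i : Fin (k + 2)) := (measurable_mks_apply (M := M) i).comp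
    (measurable_fst.fst.prodMk (measurable_fst.snd.fst.prodMk measurable_snd) :
      Measurable fun w : (M × M × (Fin (k + 1) → Fin d → ℝ)) × (Fin k → M) =>
        (w.1.1, w.1.2.1, w.2))
  have hedge (i j : Fin (k + 2)) :=
    hmeas.comp (((hpts j).sub (hpts i)).prodMk ((hmks i).prodMk (hmks j)))
  simp only [Function.uncurry_def, walkWeight, avoidProd_eq_prod_avoidPairs]
  exact ((Finset.measurable_fun_prod _ fun i _ => hedge i.castSucc i.succ).mul
    (Finset.measurable_fun_prod _ fun e _ => (hedge e.1 e.2).const_sub 1)).ennreal_ofReal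

variable [SigmaFinite Q]

theorem measurable_walkDensity
    (hmeas : Measurable fun z : (Fin d → ℝ) × M × M => φ z.1 z.2.1 z.2.2) (k : ℕ) :
    Measurable fun w : M × M × (Fin (k + 1) → Fin d → ℝ) =>
      walkDensity Q φ k w.1 w.2.1 w.2.2 :=
  (measurable_walkWeight hmeas k).lintegral_prod_right

theorem walkDensity_concatPts_le
    (hmeas : Measurable fun z : (Fin d → ℝ) × M × M => φ z.1 z.2.1 z.2.2)
    (h01 : ∀ x p q, φ x p q ∈ Set.Icc (0 : ℝ) 1) {k l : ℕ} (p q : M)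
    (y : Fin (k + 1) → Fin d → ℝ) (z : Fin (l + 1) → Fin d → ℝ) :
    walkDensity Q φ (k + 1 + l) p q (concatPts y z) ≤
      ∫⁻ r, walkDensity Q φ k p r y * walkDensity Q φ l r q z ∂Q := by
  have hweight {n : ℕ} (p q : M) (y : Fin (n + 1) → Fin d → ℝ) :
      Measurable (walkWeight φ n p q y) :=
    (measurable_walkWeight hmeas n).of_uncurry_left (x := (p, q, y))
  have hconcat := measurePreserving_concatMks k l Q
  have hcomp := (hweight p q (concatPts y z)).comp hconcat.measurable
  calc walkDensity Q φ (k + 1 + l) p q (concatPts y z)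
      = ∫⁻ r, ∫⁻ w : (Fin k → M) × (Fin l → M),
          walkWeight φ (k + 1 + l) p q (concatPts y z) (concatMks r w.1 w.2)
          ∂(Measure.pi fun _ => Q).prod (Measure.pi fun _ => Q) ∂Q :=
        (hconcat.lintegral_comp (hweight p q _)).symm.trans (lintegral_prod _ hcomp.aemeasurable)
    _ ≤ ∫⁻ r, ∫⁻ w : (Fin k → M) × (Fin l → M),
          walkWeight φ k p r y w.1 * walkWeight φ l r q z w.2
          ∂(Measure.pi fun _ => Q).prod (Measure.pi fun _ => Q) ∂Q :=
        lintegral_mono fun r => lintegral_mono fun w => walkWeight_concat_le p q r y z w.1 w.2 h01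
    _ = ∫⁻ r, walkDensity Q φ k p r y * walkDensity Q φ l r q z ∂Q :=
        lintegral_congr fun r =>
          lintegral_prod_mul (hweight p r y).aemeasurable (hweight r q z).aemeasurable

theorem stmt7_general
    (hmeas : Measurable fun z : (Fin d → ℝ) × M × M => φ z.1 z.2.1 z.2.2)
    (h01 : ∀ x p q, φ x p q ∈ Set.Icc (0 : ℝ) 1) (k l : ℕ) (p q : M) :
    dSAW Q φ (k + 1 + l) p q ≤ ∫⁻ r, dSAW Q φ k p r * dSAW Q φ l r q ∂Q := by
  have hdensity (n : ℕ) : Measurable fun w : M × M × (Fin (n + 1) → Fin d → ℝ) =>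
      walkDensity Q φ n w.1 w.2.1 w.2.2 := measurable_walkDensity Q hmeas n
  have hconcat := measurePreserving_concatPts d k l
  simp only [dSAW_eq_lintegral_walkDensity]
  calc ∫⁻ x, walkDensity Q φ (k + 1 + l) p q x
      = ∫⁻ w : (Fin (k + 1) → Fin d → ℝ) × (Fin (l + 1) → Fin d → ℝ),
          walkDensity Q φ (k + 1 + l) p q (concatPts w.1 w.2) :=
        (hconcat.lintegral_comp (by fun_prop)).symm
    _ ≤ ∫⁻ w : (Fin (k + 1) → Fin d → ℝ) × (Fin (l + 1) → Fin d → ℝ),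
          ∫⁻ r, walkDensity Q φ k p r w.1 * walkDensity Q φ l r q w.2 ∂Q :=
        lintegral_mono fun w => walkDensity_concatPts_le Q hmeas h01 p q w.1 w.2
    _ = ∫⁻ r, (∫⁻ w : (Fin (k + 1) → Fin d → ℝ) × (Fin (l + 1) → Fin d → ℝ),
          walkDensity Q φ k p r w.1 * walkDensity Q φ l r q w.2) ∂Q :=
        lintegral_lintegral_swap (by fun_prop)
    _ = ∫⁻ r, (∫⁻ y, walkDensity Q φ k p r y) * (∫⁻ z, walkDensity Q φ l r q z) ∂Q :=
        lintegral_congr fun r => lintegral_prod_mul (by fun_prop) (by fun_prop)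

end Kernel

/-- Submultiplicativity of the self-avoiding-walk kernel:
`d^{[2n]}(p,q) ≤ ∫ d^{[n]}(p,r) d^{[n]}(r,q) Q(dr)` for every `n ≥ 1` (here `n = k+1`,
so `d^{[n]} = dSAW Q φ k` and `d^{[2n]} = dSAW Q φ (2k+1)`). -/
theorem stmt7 {d : ℕ} (hd : 1 ≤ d) {M : Type*} [MeasurableSpace M]
    (Q : Measure M) [IsProbabilityMeasure Q]
    (φ : (Fin d → ℝ) → M → M → ℝ)
    (hmeas : Measurable (fun z : (Fin d → ℝ) × M × M => φ z.1 z.2.1 z.2.2))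
    (h01 : ∀ x p q, φ x p q ∈ Set.Icc (0 : ℝ) 1)
    (hsym : ∀ x p q, φ x p q = φ (-x) q p)
    (k : ℕ) (p q : M) :
    dSAW Q φ (2 * k + 1) p q ≤ ∫⁻ r, dSAW Q φ k p r * dSAW Q φ k r q ∂Q := by
  have hk : 2 * k + 1 = k + 1 + k := by omega
  exact hk ▸ stmt7_general Q hmeas h01 k k p q
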